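/- There is an absolute constant C>0 with the following property. Let G=(V,E,ω) be a finite weighted undirected graph on n≥2 vertices with positive edge weights. Let κ be an integer with 2≤κ≤(log₂ n)/4, let ρ be a real with 1/κ≤ρ<1/2, and let ε be a real with 0<ε≤1. Then there exists a (β,ε)-hopset H for G with at most C·n^{1+1/κ}·log₂ n edges, where β = ⌈(C·(log₂κ + 1/ρ)/ε)^{log₂κ + 1/ρ}⌉. -/

import Mathlib

open scoped ENNReal Classical

/-- `hopDist w t u v` is the minimum total weight of a `u`–`v` path with at most `t` edges,
in the weighted graph whose (symmetric) weight function is `w` (`⊤` meaning "no edge"). -/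
noncomputable def hopDist {V : Type*} (w : V → V → ℝ≥0∞) : ℕ → V → V → ℝ≥0∞
  | 0, u, v => if u = v then 0 else ⊤
  | t + 1, u, v => min (hopDist w t u v) (⨅ x : V, w u x + hopDist w t x v)

/-- Shortest-path distance. -/
noncomputable def gDist {V : Type*} (w : V → V → ℝ≥0∞) (u v : V) : ℝ≥0∞ :=
  ⨅ t : ℕ, hopDist w t u v

/-- Union of two weighted edge sets, keeping the smaller weight on parallel edges. -/
noncomputable def unionW {V : Type*} (w₁ w₂ : V → V → ℝ≥0∞) (u v : V) : ℝ≥0∞ :=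
  min (w₁ u v) (w₂ u v)

/-- Number of (undirected) edges of a weighted edge set. -/
noncomputable def edgeCount {V : Type*} (w : V → V → ℝ≥0∞) : ℕ :=
  Set.ncard {p : Sym2 V | ∃ u v : V, p = s(u, v) ∧ u ≠ v ∧ w u v ≠ ⊤}

/-- `H` is a `(β, ε)`-hopset for `G`. -/
def IsHopset {V : Type*} (wG wH : V → V → ℝ≥0∞) (β : ℕ) (ε : ℝ) : Prop :=
  ∀ u v : V, gDist wG u v ≤ hopDist (unionW wG wH) β u v ∧
    hopDist (unionW wG wH) β u v ≤ ENNReal.ofReal (1 + ε) * gDist wG u v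

/-!
Thorup–Zwick style hierarchy. Let `k = ⌊log₂ κ⌋`, `x = n^(1/κ)` and `t i = n x / x^(2^i)`. Starting
from `A 0 = V`, choose `A (i+1)` with fewer than `t (i+1)` vertices by averaging over all samples of
a given size, and join each `u ∈ A i` to the vertices of `A i` closer to it than all of `A (i+1)`
and to its nearest vertex in `A (i+1)`, each edge weighted by the distance. Since
`(t i)^2 = n x · t (i+1)`, a level contributes at most `n x + n` edges, and `A (k+1) = ∅` because
`κ + 1 ≤ 2^(k+1)`.

For the stretch, cut a shortest path at scale `K Δ` into at most `K` pieces of scale `Δ`. Either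
every piece is well approximated, or the first and the last bad piece have endpoints close to
`A i`, and two vertices of `A i` are joined directly or one of them is close to `A (i+1)`. Going
from scale `Δ` to `K Δ` thus adds `O(1/K)` to the relative error and multiplies the number of hops
by `O(K)`; at the top level `A (k+1) = ∅` leaves only the first alternative. Choosing `K` of order
`k / ε` makes the total error `ε`.
-/

open Finset

section Distances

variable {V : Type*} (w : V → V → ℝ≥0∞)

theorem hopDist_succ_le (t : ℕ) (u v : V) : hopDist w (t + 1) u v ≤ hopDist w t u v := by
  rw [hopDist]
  exact min_le_left _ _

theorem hopDist_succ_le_add (t : ℕ) (u x v : V) :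
    hopDist w (t + 1) u v ≤ w u x + hopDist w t x v := by
  rw [hopDist]
  exact (min_le_right _ _).trans (iInf_le _ x)

theorem hopDist_antitone (u v : V) : Antitone fun t => hopDist w t u v :=
  antitone_nat_of_succ_le fun t => hopDist_succ_le w t u v

theorem hopDist_self (t : ℕ) (u : V) : hopDist w t u u = 0 :=
  le_antisymm ((hopDist_antitone w u u t.zero_le).trans (by simp [hopDist])) zero_le

theorem hopDist_one_le (u v : V) : hopDist w 1 u v ≤ w u v := by
  simpa only [hopDist_self, add_zero] using hopDist_succ_le_add w 0 u v v

theorem hopDist_triangle (s t : ℕ) (u v x : V) :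
    hopDist w (s + t) u x ≤ hopDist w s u v + hopDist w t v x := by
  induction s generalizing u with
  | zero =>
    by_cases h : u = v
    · simp [h, hopDist_self]
    · simp [hopDist, h]
  | succ s ih =>
    rw [Nat.add_right_comm, hopDist.eq_def w (s + 1), min_add, ENNReal.iInf_add]
    refine le_min ((hopDist_succ_le w _ u x).trans (ih u)) (le_iInf fun y => ?_)
    calc hopDist w (s + t + 1) u x ≤ w u y + hopDist w (s + t) y x :=
          hopDist_succ_le_add w _ u y x
      _ ≤ w u y + (hopDist w s y v + hopDist w t v x) := by gcongr; exact ih y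
      _ = w u y + hopDist w s y v + hopDist w t v x := (add_assoc ..).symm

theorem hopDist_comm {w : V → V → ℝ≥0∞} (hw : ∀ u v, w u v = w v u) (t : ℕ) (u v : V) :
    hopDist w t u v = hopDist w t v u := by
  suffices ∀ u v, hopDist w t u v ≤ hopDist w t v u from le_antisymm (this u v) (this v u)
  induction t with
  | zero => simp [hopDist, eq_comm]
  | succ t ih =>
    intro u v
    rw [hopDist.eq_def w (t + 1) v u]
    refine le_min ((hopDist_succ_le w t u v).trans (ih u v)) (le_iInf fun y => ?_)
    calc hopDist w (t + 1) u v ≤ hopDist w t u y + hopDist w 1 y v := hopDist_triangle w t 1 u y v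
      _ ≤ hopDist w t y u + w y v := add_le_add (ih u y) (hopDist_one_le w y v)
      _ = w v y + hopDist w t y u := by rw [add_comm, hw y v]

theorem gDist_le_hopDist (t : ℕ) (u v : V) : gDist w u v ≤ hopDist w t u v :=
  iInf_le _ t

theorem gDist_le_weight (u v : V) : gDist w u v ≤ w u v :=
  (gDist_le_hopDist w 1 u v).trans (hopDist_one_le w u v)

theorem gDist_self (u : V) : gDist w u u = 0 :=
  le_antisymm ((gDist_le_hopDist w 0 u u).trans_eq (hopDist_self w 0 u)) zero_le

theorem gDist_comm {w : V → V → ℝ≥0∞} (hw : ∀ u v, w u v = w v u) (u v : V) :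
    gDist w u v = gDist w v u :=
  iInf_congr fun t => hopDist_comm hw t u v

theorem gDist_triangle (u v x : V) : gDist w u x ≤ gDist w u v + gDist w v x :=
  ENNReal.le_iInf_add_iInf fun s t =>
    (gDist_le_hopDist w (s + t) u x).trans (hopDist_triangle w s t u v x)

theorem gDist_le_gDist_add_weight (u v x : V) : gDist w u x ≤ gDist w u v + w v x :=
  (gDist_triangle w u v x).trans (add_le_add_right (gDist_le_weight w v x) _)

theorem gDist_le_hopDist_of_gDist_le {w W : V → V → ℝ≥0∞} (hW : ∀ u v, gDist w u v ≤ W u v)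
    (t : ℕ) (u v : V) : gDist w u v ≤ hopDist W t u v := by
  induction t generalizing u with
  | zero =>
    by_cases h : u = v
    · simp [h, gDist_self]
    · simp [hopDist, h]
  | succ t ih =>
    rw [hopDist]
    exact le_min (ih u) (le_iInf fun y =>
      (gDist_triangle w u y v).trans (add_le_add (hW u y) (ih y)))

theorem gDist_pos [Finite V] {w : V → V → ℝ≥0∞} (hw : ∀ u v, 0 < w u v) {u v : V} (h : u ≠ v) :
    0 < gDist w u v := by
  have : Nonempty (V × V) := ⟨(u, v)⟩
  obtain ⟨p, hp⟩ := Finite.exists_min fun p : V × V => w p.1 p.2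
  refine (hw p.1 p.2).trans_le (le_iInf fun t => ?_)
  induction t generalizing u with
  | zero => simp [hopDist, h]
  | succ t ih =>
    rw [hopDist]
    exact le_min (ih h) (le_iInf fun y => (hp (u, y)).trans le_self_add)

theorem le_gDist_add_hopDist_of_forall_crossing {s v : V} {Δ c : ℝ≥0∞} (hv : Δ < gDist w s v)
    (hc : ∀ y x, gDist w s y ≤ Δ → Δ < gDist w s y + w y x →
      c ≤ gDist w s y + w y x + gDist w x v)
    (t : ℕ) {u : V} (hu : gDist w s u ≤ Δ) : c ≤ gDist w s u + hopDist w t u v := by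
  induction t generalizing u with
  | zero =>
    have hne : u ≠ v := fun h => hv.not_ge (h ▸ hu)
    simp [hopDist, hne]
  | succ t ih =>
    rw [hopDist, ← min_add_add_left, ENNReal.add_iInf]
    refine le_min (ih hu) (le_iInf fun x => ?_)
    rw [← add_assoc]
    by_cases hx : gDist w s u + w u x ≤ Δ
    · have hsx := gDist_le_gDist_add_weight w s u x
      exact (ih (hsx.trans hx)).trans (add_le_add_left hsx _)
    · exact (hc u x hu (not_le.mp hx)).trans (add_le_add_right (gDist_le_hopDist w t x v) _)

theorem exists_crossing_edge [Finite V] {s v : V} {Δ : ℝ≥0∞} (hv : Δ < gDist w s v) :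
    ∃ y x, gDist w s y ≤ Δ ∧ Δ < gDist w s y + w y x ∧
      gDist w s y + w y x + gDist w x v ≤ gDist w s v := by
  let crossing := {p : V × V // gDist w s p.1 ≤ Δ ∧ Δ < gDist w s p.1 + w p.1 p.2}
  have : Nonempty crossing :=
    ⟨(s, v), by simp [gDist_self], hv.trans_le (gDist_le_gDist_add_weight w s s v)⟩
  obtain ⟨⟨⟨y, x⟩, hy, hyx⟩, hmin⟩ := Finite.exists_min fun p : crossing =>
    gDist w s p.1.1 + w p.1.1 p.1.2 + gDist w p.1.2 v
  refine ⟨y, x, hy, hyx, le_iInf fun t => ?_⟩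
  simpa [gDist_self] using le_gDist_add_hopDist_of_forall_crossing w hv
    (fun y' x' hy' hyx' => hmin ⟨(y', x'), hy', hyx'⟩) t (u := s) (by simp [gDist_self])

end Distances

section Stretch

variable {V : Type*} {w W : V → V → ℝ≥0∞}

/-- `W` is the weight function of a graph obtained from the graph of `w` by adding or cheapening
edges without shortening any distance. -/
structure IsAugmentation (w W : V → V → ℝ≥0∞) : Prop where
  symm : ∀ u v, W u v = W v u
  le : ∀ u v, W u v ≤ w u v
  gDist_le : ∀ u v, gDist w u v ≤ W u v

/-- One level of a hierarchy of vertex sets: any two vertices of `A` are joined in `W` by an edge as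
long as their distance in `w`, or else the first is joined to a vertex of `S` by an edge no longer
than that. One-hop distances stand for edges so that equal vertices need none. -/
def IsShortcutLevel (w W : V → V → ℝ≥0∞) (A S : Finset V) : Prop :=
  ∀ u ∈ A, ∀ v ∈ A, hopDist W 1 u v ≤ gDist w u v ∨ ∃ z ∈ S, hopDist W 1 u z ≤ gDist w u v

/-- The invariant of the stretch analysis at scale `Δ`: two vertices at distance at most `Δ` are
joined in `W` by an `h`-hop path with additive error `α * Δ`, or else the first reaches `B` by an
`h`-hop path of length at most `2 * Δ`. -/
def ApproxOrNear (w W : V → V → ℝ≥0∞) (B : Finset V) (h : ℕ) (α Δ : ℝ≥0∞) : Prop :=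
  ∀ u v, gDist w u v ≤ Δ →
    hopDist W h u v ≤ gDist w u v + α * Δ ∨ ∃ z ∈ B, hopDist W h u z ≤ 2 * Δ

theorem ApproxOrNear.of_isShortcutLevel [Fintype V] {S : Finset V}
    (hS : IsShortcutLevel w W univ S) (Δ : ℝ≥0∞) : ApproxOrNear w W S 1 0 Δ := by
  intro u v huv
  refine (hS u (mem_univ u) v (mem_univ v)).imp (by simp) ?_
  rintro ⟨z, hz, huz⟩
  exact ⟨z, hz, huz.trans (huv.trans (le_mul_of_one_le_left' one_le_two))⟩

/-- The outcome of following a shortest path from `u` to `v` up to the first vertex near `B`: either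
`v` is reached in `W` by a `b`-hop path with relative error `α` and additive error `α * Δ`, or some
vertex `x` on the way is reached with relative error `α` only and is near `B`. -/
def ApproxToward (w W : V → V → ℝ≥0∞) (B : Finset V) (h b : ℕ) (α Δ : ℝ≥0∞) (u v : V) : Prop :=
  hopDist W b u v ≤ (1 + α) * gDist w u v + α * Δ ∨
    ∃ x, gDist w u x + gDist w x v ≤ gDist w u v ∧ hopDist W b u x ≤ (1 + α) * gDist w u x ∧
      ∃ z ∈ B, hopDist W h x z ≤ 2 * Δ

variable {B : Finset V} {h b : ℕ} {α Δ : ℝ≥0∞}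

theorem IsShortcutLevel.exists_hopDist_le_of_near {S : Finset V}
    (hBS : IsShortcutLevel w W B S) (hw : ∀ u v, w u v = w v u) (hW : IsAugmentation w W) {x y : V}
    (hx : ∃ z ∈ B, hopDist W h x z ≤ 2 * Δ) (hy : ∃ z ∈ B, hopDist W h y z ≤ 2 * Δ) :
    ∃ z, (z = y ∨ z ∈ S) ∧ hopDist W (2 * h + 1) x z ≤ gDist w x y + 8 * Δ := by
  obtain ⟨x', hx', hxx'⟩ := hx
  obtain ⟨y', hy', hyy'⟩ := hy
  have hx'y' : gDist w x' y' ≤ 2 * Δ + gDist w x y + 2 * Δ := by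
    have hxx'_dist := (gDist_le_hopDist_of_gDist_le hW.gDist_le h x x').trans hxx'
    have hyy'_dist := (gDist_le_hopDist_of_gDist_le hW.gDist_le h y y').trans hyy'
    rw [gDist_comm hw] at hxx'_dist
    exact (gDist_triangle w x' y y').trans
      (add_le_add ((gDist_triangle w x' x y).trans (add_le_add_left hxx'_dist _)) hyy'_dist)
  have hvia {z : V} (hz : hopDist W 1 x' z ≤ gDist w x' y') :
      hopDist W (h + 1) x z ≤ gDist w x y + 6 * Δ :=
    calc hopDist W (h + 1) x z ≤ hopDist W h x x' + hopDist W 1 x' z :=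
          hopDist_triangle W h 1 x x' z
      _ ≤ 2 * Δ + (2 * Δ + gDist w x y + 2 * Δ) := add_le_add hxx' (hz.trans hx'y')
      _ = gDist w x y + 6 * Δ := by ring
  rcases hBS x' hx' y' hy' with hdirect | ⟨z, hz, hx'z⟩
  · refine ⟨y, .inl rfl, ?_⟩
    rw [hopDist_comm hW.symm] at hyy'
    calc hopDist W (2 * h + 1) x y = hopDist W (h + 1 + h) x y := by congr 1; ring
      _ ≤ hopDist W (h + 1) x y' + hopDist W h y' y := hopDist_triangle W _ h x y' y
      _ ≤ gDist w x y + 6 * Δ + 2 * Δ := add_le_add (hvia hdirect) hyy'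
      _ = gDist w x y + 8 * Δ := by ring
  · refine ⟨z, .inr hz, (hopDist_antitone W x z (by omega)).trans ((hvia hx'z).trans ?_)⟩
    gcongr
    norm_num

theorem ApproxToward.of_gDist_le (hB : ApproxOrNear w W B h α Δ) (hb : h ≤ b) {u v : V}
    (huv : gDist w u v ≤ Δ) : ApproxToward w W B h b α Δ u v := by
  rcases hB u v huv with happrox | hnear
  · left
    calc hopDist W b u v ≤ hopDist W h u v := hopDist_antitone W u v hb
      _ ≤ gDist w u v + α * Δ := happrox
      _ ≤ (1 + α) * gDist w u v + α * Δ := by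
          gcongr
          exact le_mul_of_one_le_left' le_self_add
  · exact .inr ⟨u, by simp [gDist_self], by simp [hopDist_self], hnear⟩

theorem ApproxToward.prepend {a : ℕ} {l : ℝ≥0∞} {u x v : V}
    (hxv : ApproxToward w W B h b α Δ x v) (huv_ne_top : gDist w u v ≠ ⊤)
    (hux : gDist w u x ≤ l) (hl : l + gDist w x v ≤ gDist w u v)
    (hhop : hopDist W a u x ≤ (1 + α) * l) : ApproxToward w W B h (a + b) α Δ u v := by
  have hconcat (y : V) : hopDist W (a + b) u y ≤ (1 + α) * l + hopDist W b x y :=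
    (hopDist_triangle W a b u x y).trans (add_le_add_left hhop _)
  rcases hxv with happrox | ⟨y, hyv, hxy, hy⟩
  · left
    calc hopDist W (a + b) u v ≤ (1 + α) * l + ((1 + α) * gDist w x v + α * Δ) :=
          (hconcat v).trans (add_le_add_right happrox _)
      _ = (1 + α) * (l + gDist w x v) + α * Δ := by ring
      _ ≤ (1 + α) * gDist w u v + α * Δ := by gcongr
  · have hlyv : l + gDist w x y + gDist w y v ≤ gDist w u v := by
      rw [add_assoc]
      exact (add_le_add_right hyv l).trans hl
    have huy : gDist w u y ≤ l + gDist w x y :=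
      (gDist_triangle w u x y).trans (add_le_add_left hux _)
    have hly : l + gDist w x y ≤ gDist w u y := by
      have hyv_ne_top : gDist w y v ≠ ⊤ :=
        ne_top_of_le_ne_top huv_ne_top (le_add_self.trans hlyv)
      exact (ENNReal.add_le_add_iff_right hyv_ne_top).mp (hlyv.trans (gDist_triangle w u y v))
    refine .inr ⟨y, (add_le_add_left huy _).trans hlyv, ?_, hy⟩
    calc hopDist W (a + b) u y ≤ (1 + α) * l + (1 + α) * gDist w x y :=
          (hconcat y).trans (add_le_add_right hxy _)
      _ = (1 + α) * (l + gDist w x y) := by ring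
      _ ≤ (1 + α) * gDist w u y := by gcongr

namespace ApproxOrNear

/- The error stays proportional to the distance covered because each piece, together with the edge
leaving it, is longer than `Δ`. -/
theorem approxToward [Finite V] (hWw : ∀ u v, W u v ≤ w u v) (hB : ApproxOrNear w W B h α Δ)
    (m : ℕ) {u v : V} (huv : gDist w u v ≤ m * Δ) :
    ApproxToward w W B h (m * (h + 1) + h) α Δ u v := by
  induction m generalizing u with
  | zero => exact .of_gDist_le hB (Nat.le_add_left _ _) (huv.trans (by simp))
  | succ m ih =>
    rcases le_or_gt (gDist w u v) Δ with hd | hd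
    · exact .of_gDist_le hB (Nat.le_add_left _ _) hd
    obtain ⟨y, x, hy, hyx, hx⟩ := exists_crossing_edge w hd
    rcases hB u y hy with huy | hnear
    · have hux : hopDist W (h + 1) u x ≤ (1 + α) * (gDist w u y + w y x) :=
        calc hopDist W (h + 1) u x ≤ hopDist W h u y + hopDist W 1 y x :=
              hopDist_triangle W h 1 u y x
          _ ≤ (gDist w u y + α * (gDist w u y + w y x)) + w y x := by
              gcongr
              · exact huy.trans (by gcongr)
              · exact (hopDist_one_le W y x).trans (hWw y x)
          _ = (1 + α) * (gDist w u y + w y x) := by ring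
      have hxv : gDist w x v ≤ m * Δ := by
        by_contra! hlt
        refine (ENNReal.add_lt_add hyx hlt).not_ge (hx.trans (huv.trans_eq ?_))
        push_cast
        ring
      have huv_ne_top : gDist w u v ≠ ⊤ :=
        ne_top_of_le_ne_top (ENNReal.mul_ne_top (ENNReal.natCast_ne_top _) hd.ne_top) huv
      rw [show (m + 1) * (h + 1) + h = (h + 1) + (m * (h + 1) + h) by ring]
      exact (ih hxv).prepend huv_ne_top (gDist_le_gDist_add_weight w u y x) hx hux
    · exact .inr ⟨u, by simp [gDist_self], by simp [hopDist_self], hnear⟩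

theorem approx_or_exists_near_near [Finite V] (hw : ∀ u v, w u v = w v u)
    (hW : IsAugmentation w W) (hB : ApproxOrNear w W B h α Δ) (m : ℕ) {u v : V}
    (huv : gDist w u v ≤ m * Δ) :
    hopDist W (2 * (m * (h + 1) + h)) u v ≤ (1 + α) * gDist w u v + α * Δ ∨
      ∃ x y, gDist w u x + gDist w x y + gDist w y v ≤ gDist w u v ∧
        hopDist W (m * (h + 1) + h) u x ≤ (1 + α) * gDist w u x ∧
        hopDist W (m * (h + 1) + h) y v ≤ (1 + α) * gDist w y v ∧
        (∃ z ∈ B, hopDist W h x z ≤ 2 * Δ) ∧ ∃ z ∈ B, hopDist W h y z ≤ 2 * Δ := by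
  set b := m * (h + 1) + h
  rcases hB.approxToward hW.le m huv with happrox | ⟨x, hxv, hux, hx⟩
  · exact .inl ((hopDist_antitone W u v (Nat.le_mul_of_pos_left b two_pos)).trans happrox)
  have hvx : gDist w v x ≤ m * Δ := by
    rw [gDist_comm hw]
    exact (le_add_self.trans hxv).trans huv
  rcases hB.approxToward hW.le m hvx with happrox | ⟨y, hyx, hvy, hy⟩
  · left
    rw [hopDist_comm hW.symm, gDist_comm hw v x] at happrox
    calc hopDist W (2 * b) u v ≤ hopDist W b u x + hopDist W b x v := by
          rw [two_mul]
          exact hopDist_triangle W b b u x v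
      _ ≤ (1 + α) * gDist w u x + ((1 + α) * gDist w x v + α * Δ) := add_le_add hux happrox
      _ = (1 + α) * (gDist w u x + gDist w x v) + α * Δ := by ring
      _ ≤ (1 + α) * gDist w u v + α * Δ := by gcongr
  · right
    rw [hopDist_comm hW.symm, gDist_comm hw v y] at hvy
    rw [gDist_comm hw v y, gDist_comm hw y x, gDist_comm hw v x, add_comm] at hyx
    refine ⟨x, y, ?_, hux, hvy, hx, hy⟩
    rw [add_assoc]
    exact (add_le_add_right hyx _).trans hxv

theorem exists_hopDist_le [Finite V] (hw : ∀ u v, w u v = w v u) (hW : IsAugmentation w W)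
    (hB : ApproxOrNear w W B h α Δ) {S : Finset V} (hBS : IsShortcutLevel w W B S) (m : ℕ)
    {u v : V} (huv : gDist w u v ≤ m * Δ) :
    ∃ z, (z = v ∨ z ∈ S) ∧ hopDist W (2 * (m * (h + 1) + h) + (2 * h + 1)) u z ≤
      (1 + α) * gDist w u v + (α + 8) * Δ := by
  rcases hB.approx_or_exists_near_near hw hW m huv with
    happrox | ⟨x, y, hxy, hux, hyv, hx, hy⟩
  · refine ⟨v, .inl rfl, (hopDist_antitone W u v (Nat.le_add_right _ _)).trans ?_⟩
    exact happrox.trans (by gcongr; exact le_self_add)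
  set b := m * (h + 1) + h
  obtain ⟨z, hz, hxz⟩ := hBS.exists_hopDist_le_of_near hw hW hx hy
  have huz : hopDist W (b + (2 * h + 1)) u z ≤
      (1 + α) * gDist w u x + (gDist w x y + 8 * Δ) :=
    (hopDist_triangle W b _ u x z).trans (add_le_add hux hxz)
  have htotal : (1 + α) * gDist w u x + (gDist w x y + 8 * Δ) + (1 + α) * gDist w y v ≤
      (1 + α) * gDist w u v + (α + 8) * Δ :=
    calc (1 + α) * gDist w u x + (gDist w x y + 8 * Δ) + (1 + α) * gDist w y v
        ≤ (1 + α) * gDist w u x + ((1 + α) * gDist w x y + (α + 8) * Δ) +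
            (1 + α) * gDist w y v := by
          gcongr
          exacts [le_mul_of_one_le_left' le_self_add, le_add_self]
      _ = (1 + α) * (gDist w u x + gDist w x y + gDist w y v) + (α + 8) * Δ := by ring
      _ ≤ (1 + α) * gDist w u v + (α + 8) * Δ := by gcongr
  rcases hz with rfl | hz
  · refine ⟨v, .inl rfl, le_trans ?_ htotal⟩
    rw [two_mul, add_right_comm]
    exact (hopDist_triangle W _ b u z v).trans (add_le_add huz hyv)
  · refine ⟨z, .inr hz, (hopDist_antitone W u z (by omega)).trans (huz.trans ?_)⟩
    exact le_self_add.trans htotal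

theorem succ_level [Finite V] (hw : ∀ u v, w u v = w v u) (hW : IsAugmentation w W)
    (hB : ApproxOrNear w W B h α Δ) {S : Finset V} (hBS : IsShortcutLevel w W B S)
    {K : ℕ} {α' : ℝ≥0∞} (hα : α * K + α + 8 ≤ α' * K) (hα' : α' ≤ 1) {h' : ℕ}
    (hh : 2 * (K * (h + 1) + h) + (2 * h + 1) ≤ h') :
    ApproxOrNear w W S h' α' (K * Δ) := by
  intro u v huv
  have herror : (1 + α) * gDist w u v + (α + 8) * Δ ≤ gDist w u v + α' * (K * Δ) :=
    calc (1 + α) * gDist w u v + (α + 8) * Δ = gDist w u v + α * gDist w u v + (α + 8) * Δ := by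
          ring
      _ ≤ gDist w u v + α * (K * Δ) + (α + 8) * Δ := by gcongr
      _ = gDist w u v + (α * K + α + 8) * Δ := by ring
      _ ≤ gDist w u v + α' * K * Δ := by gcongr
      _ = gDist w u v + α' * (K * Δ) := by rw [mul_assoc]
  obtain ⟨z, hz, huz⟩ := hB.exists_hopDist_le hw hW hBS K huv
  replace huz := ((hopDist_antitone W u z hh).trans huz).trans herror
  rcases hz with rfl | hz
  · exact .inl huz
  · refine .inr ⟨z, hz, huz.trans ?_⟩
    calc gDist w u v + α' * (K * Δ) ≤ K * Δ + 1 * (K * Δ) := by gcongr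
      _ = 2 * (K * Δ) := by ring

theorem of_hierarchy [Fintype V] (hw : ∀ u v, w u v = w v u) (hW : IsAugmentation w W)
    {A : ℕ → Finset V} (hA0 : A 0 = univ) {k : ℕ}
    (hA : ∀ i ≤ k, IsShortcutLevel w W (A i) (A (i + 1)))
    {K : ℕ} (hK : 9 * k ≤ K) (Δ : ℝ≥0∞) {i : ℕ} (hi : i ≤ k) :
    ApproxOrNear w W (A (i + 1)) ((4 * K + 5) ^ i) (9 * i / K) (K ^ i * Δ) := by
  induction i with
  | zero => simpa using of_isShortcutLevel (hA0 ▸ hA 0 hi) Δ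
  | succ i ih =>
    have hK0 : (K : ℝ≥0∞) ≠ 0 := by exact_mod_cast (by omega : K ≠ 0)
    have hcancel (a : ℝ≥0∞) : a / K * K = a :=
      ENNReal.div_mul_cancel hK0 (ENNReal.natCast_ne_top K)
    have hle_one (j : ℕ) (hj : j ≤ k) : 9 * (j : ℝ≥0∞) / K ≤ 1 :=
      ENNReal.div_le_of_le_mul (by exact_mod_cast (by omega : 9 * j ≤ 1 * K))
    have hα : 9 * (i : ℝ≥0∞) / K * K + 9 * i / K + 8 ≤ 9 * (i + 1 : ℕ) / K * K := by
      rw [hcancel, hcancel]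
      calc 9 * (i : ℝ≥0∞) + 9 * i / K + 8 ≤ 9 * i + 1 + 8 := by
            gcongr
            exact hle_one i (by omega)
        _ = 9 * (i + 1 : ℕ) := by push_cast; ring
    have hh : 2 * (K * ((4 * K + 5) ^ i + 1) + (4 * K + 5) ^ i) + (2 * (4 * K + 5) ^ i + 1) ≤
        (4 * K + 5) ^ (i + 1) := by
      have hpos : 1 ≤ (4 * K + 5) ^ i := Nat.one_le_pow _ _ (by omega)
      rw [pow_succ]
      nlinarith
    rw [pow_succ' (K : ℝ≥0∞), mul_assoc]
    exact (ih (by omega)).succ_level hw hW (hA (i + 1) hi) hα (hle_one (i + 1) hi) hh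

end ApproxOrNear

theorem hopDist_le_of_hierarchy [Fintype V] (hw : ∀ u v, w u v = w v u) (hW : IsAugmentation w W)
    {A : ℕ → Finset V} (hA0 : A 0 = univ) {k : ℕ}
    (hA : ∀ i ≤ k, IsShortcutLevel w W (A i) (A (i + 1))) (hAk : A (k + 1) = ∅)
    {K : ℕ} (hK0 : K ≠ 0) (hK : 9 * k ≤ K) (u v : V) :
    hopDist W ((4 * K + 5) ^ k) u v ≤ (1 + 9 * k / K) * gDist w u v := by
  have htop : (K : ℝ≥0∞) ^ k * (gDist w u v / K ^ k) = gDist w u v :=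
    ENNReal.mul_div_cancel (by simp [hK0]) (by finiteness)
  have hbound := ApproxOrNear.of_hierarchy hw hW hA0 hA hK (gDist w u v / K ^ k) le_rfl
  rw [htop, hAk] at hbound
  rw [add_mul, one_mul]
  exact (hbound u v le_rfl).resolve_right (by simp)

end Stretch

section Sampling

/-- The Thorup–Zwick bunch of a vertex in `A` with respect to the sample `S`, where `f` is the
distance from that vertex: the vertices of `A` closer to it than all of `S`. -/
noncomputable def bunch {V R : Type*} [Preorder R] (f : V → R) (A S : Finset V) : Finset V :=
  {v ∈ A | ∀ z ∈ S, f v < f z}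

variable {V R : Type*}

theorem mem_bunch [Preorder R] {f : V → R} {A S : Finset V} {v : V} :
    v ∈ bunch f A S ↔ v ∈ A ∧ ∀ z ∈ S, f v < f z :=
  mem_filter

theorem notMem_of_mem_bunch [Preorder R] {f : V → R} {A S : Finset V} {v : V}
    (hv : v ∈ bunch f A S) : v ∉ S :=
  fun h => lt_irrefl _ ((mem_bunch.mp hv).2 v h)

theorem bunch_self [Preorder R] (f : V → R) (A : Finset V) : bunch f A A = ∅ :=
  eq_empty_of_forall_notMem fun _ hv => notMem_of_mem_bunch hv (mem_bunch.mp hv).1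

theorem eq_of_insert_eq_insert_of_mem_bunch [Preorder R] {f : V → R} {A S S' : Finset V} {v v' : V}
    (hv : v ∈ bunch f A S) (hv' : v' ∈ bunch f A S') (h : insert v S = insert v' S') : v = v' := by
  by_contra hne
  have hvS' : v ∈ S' := (mem_insert.mp (h ▸ mem_insert_self v S)).resolve_left hne
  have hv'S : v' ∈ S := (mem_insert.mp (h ▸ mem_insert_self v' S')).resolve_left (Ne.symm hne)
  exact lt_asymm ((mem_bunch.mp hv).2 v' hv'S) ((mem_bunch.mp hv').2 v hvS')

theorem sum_card_bunch_le_choose [Preorder R] (f : V → R) (A : Finset V) (m : ℕ) :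
    ∑ S ∈ A.powersetCard m, #(bunch f A S) ≤ (#A).choose (m + 1) := by
  rw [← card_sigma, ← card_powersetCard]
  refine card_le_card_of_injOn (fun p => insert p.2 p.1) ?_ ?_
  · rintro ⟨S, v⟩ hp
    obtain ⟨hS, hv⟩ := mem_sigma.mp hp
    obtain ⟨hSA, hcard⟩ := mem_powersetCard.mp hS
    exact mem_powersetCard.mpr ⟨insert_subset (mem_bunch.mp hv).1 hSA,
      by rw [card_insert_of_notMem (notMem_of_mem_bunch hv), hcard]⟩
  · rintro ⟨S, v⟩ hp ⟨S', v'⟩ hp' (heq : insert v S = insert v' S')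
    have hv : v ∈ bunch f A S := (mem_sigma.mp hp).2
    have hv' : v' ∈ bunch f A S' := (mem_sigma.mp hp').2
    obtain rfl := eq_of_insert_eq_insert_of_mem_bunch hv hv' heq
    rw [← erase_insert (notMem_of_mem_bunch hv), heq, erase_insert (notMem_of_mem_bunch hv')]

theorem exists_card_le_and_sum_bunch_le [Preorder R] (d : V → V → R) (A : Finset V) (m : ℕ) :
    ∃ S : Finset V, #S ≤ m ∧ (m + 1) * ∑ u ∈ A, #(bunch (d u) A S) ≤ #A ^ 2 := by
  rcases le_total #A m with hm | hm
  · exact ⟨A, hm, by simp [bunch_self]⟩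
  have htotal : ∑ S ∈ A.powersetCard m, (m + 1) * ∑ u ∈ A, #(bunch (d u) A S) ≤
      ∑ S ∈ A.powersetCard m, #A ^ 2 :=
    calc ∑ S ∈ A.powersetCard m, (m + 1) * ∑ u ∈ A, #(bunch (d u) A S)
        = (m + 1) * ∑ u ∈ A, ∑ S ∈ A.powersetCard m, #(bunch (d u) A S) := by
          rw [← mul_sum, sum_comm]
      _ ≤ (m + 1) * ∑ u ∈ A, (#A).choose (m + 1) := by
          gcongr
          exact sum_card_bunch_le_choose _ A m
      _ = #A * ((#A).choose (m + 1) * (m + 1)) := by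
          rw [sum_const, smul_eq_mul]
          ring
      _ = #A * ((#A).choose m * (#A - m)) := by rw [Nat.choose_succ_right_eq]
      _ ≤ #A * ((#A).choose m * #A) := by
          gcongr
          exact Nat.sub_le _ _
      _ = ∑ S ∈ A.powersetCard m, #A ^ 2 := by
          rw [sum_const, card_powersetCard, smul_eq_mul]
          ring
  obtain ⟨S, hS, hsum⟩ := exists_le_of_sum_le (powersetCard_nonempty.mpr hm) htotal
  exact ⟨S, (mem_powersetCard.mp hS).2.le, hsum⟩

theorem exists_card_lt_and_sum_bunch_le [Preorder R] (d : V → V → R) (A : Finset V) {t : ℝ}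
    (ht : 0 < t) :
    ∃ S : Finset V, #S < t ∧ ∑ u ∈ A, (#(bunch (d u) A S) : ℝ) ≤ #A ^ 2 / t := by
  obtain ⟨m, hm⟩ : ∃ m, ⌈t⌉₊ = m + 1 := Nat.exists_eq_succ_of_ne_zero (Nat.ceil_pos.mpr ht).ne'
  obtain ⟨S, hS, hsum⟩ := exists_card_le_and_sum_bunch_le d A m
  refine ⟨S, Nat.lt_ceil.mp (by omega), (le_div_iff₀' ht).mpr ?_⟩
  calc t * ∑ u ∈ A, (#(bunch (d u) A S) : ℝ)
      ≤ (m + 1 : ℕ) * ∑ u ∈ A, (#(bunch (d u) A S) : ℝ) := by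
        gcongr
        exact hm ▸ Nat.le_ceil t
    _ ≤ #A ^ 2 := by exact_mod_cast hsum

theorem exists_card_le_bunch_add_one [LinearOrder R] (f : V → R) (A S : Finset V) :
    ∃ N : Finset V, #N ≤ #(bunch f A S) + 1 ∧ ∀ v ∈ A, v ∈ N ∨ ∃ z ∈ S, z ∈ N ∧ f z ≤ f v := by
  rcases S.eq_empty_or_nonempty with rfl | hS
  · exact ⟨bunch f A ∅, Nat.le_succ _, fun v hv => .inl (mem_bunch.mpr ⟨hv, by simp⟩)⟩
  obtain ⟨p, hp, hmin⟩ := exists_min_image S f hS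
  refine ⟨insert p (bunch f A S), card_insert_le _ _, fun v hv => ?_⟩
  by_cases hvp : f p ≤ f v
  · exact .inr ⟨p, hp, mem_insert_self _ _, hvp⟩
  · exact .inl (mem_insert_of_mem
      (mem_bunch.mpr ⟨hv, fun z hz => (not_le.mp hvp).trans_le (hmin z hz)⟩))

/-- `E` joins any two vertices of `A`, or else the first to a vertex of `S` that is no farther. -/
def CoversLevel [Preorder R] (d : V → V → R) (A S : Finset V) (E : Finset (Sym2 V)) : Prop :=
  ∀ u ∈ A, ∀ v ∈ A, s(u, v) ∈ E ∨ ∃ z ∈ S, s(u, z) ∈ E ∧ d u z ≤ d u v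

theorem CoversLevel.mono [Preorder R] {d : V → V → R} {A S : Finset V} {E E' : Finset (Sym2 V)}
    (h : CoversLevel d A S E) (hE : E ⊆ E') : CoversLevel d A S E' := fun u hu v hv =>
  (h u hu v hv).imp (@hE _) fun ⟨z, hz, huz, hle⟩ => ⟨z, hz, hE huz, hle⟩

theorem exists_coversLevel [LinearOrder R] (d : V → V → R) (A : Finset V) {t : ℝ} (ht : 0 < t) :
    ∃ (S : Finset V) (E : Finset (Sym2 V)),
      #S < t ∧ #E ≤ #A ^ 2 / t + #A ∧ CoversLevel d A S E := by
  obtain ⟨S, hS, hsum⟩ := exists_card_lt_and_sum_bunch_le d A ht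
  choose N hNcard hN using fun u => exists_card_le_bunch_add_one (d u) A S
  have hmem {u v : V} (hu : u ∈ A) (hv : v ∈ N u) :
      s(u, v) ∈ A.biUnion fun u => (N u).image (s(u, ·)) :=
    mem_biUnion.mpr ⟨u, hu, mem_image_of_mem _ hv⟩
  refine ⟨S, A.biUnion fun u => (N u).image (s(u, ·)), hS, ?_, fun u hu v hv => ?_⟩
  · have hcard : #(A.biUnion fun u => (N u).image (s(u, ·))) ≤
        ∑ u ∈ A, (#(bunch (d u) A S) + 1) :=
      card_biUnion_le.trans (sum_le_sum fun u _ => card_image_le.trans (hNcard u))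
    calc (#(A.biUnion fun u => (N u).image (s(u, ·))) : ℝ)
        ≤ ∑ u ∈ A, ((#(bunch (d u) A S) : ℝ) + 1) := by exact_mod_cast hcard
      _ = ∑ u ∈ A, (#(bunch (d u) A S) : ℝ) + #A := by simp [sum_add_distrib]
      _ ≤ #A ^ 2 / t + #A := by gcongr
  · exact (hN u v hv).imp (hmem hu) fun ⟨z, hz, hzN, hle⟩ => ⟨z, hz, hmem hu hzN, hle⟩

theorem exists_coversLevel_seq [LinearOrder R] (d : V → V → R) (A₀ : Finset V) {t : ℕ → ℝ}
    (ht : ∀ i, 0 < t i) :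
    ∃ (A : ℕ → Finset V) (E : ℕ → Finset (Sym2 V)), A 0 = A₀ ∧ ∀ i,
      #(A (i + 1)) < t (i + 1) ∧ #(E i) ≤ (#(A i) : ℝ) ^ 2 / t (i + 1) + #(A i) ∧
        CoversLevel d (A i) (A (i + 1)) (E i) := by
  choose S E hSE using fun i A => exists_coversLevel d A (ht (i + 1))
  let A (i : ℕ) : Finset V := i.rec A₀ S
  exact ⟨A, fun i => E i (A i), rfl, fun i => hSE i (A i)⟩

theorem exists_hierarchy [Fintype V] [LinearOrder R] (d : V → V → R) {k : ℕ} {t : ℕ → ℝ}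
    (ht : ∀ i, 0 < t i) (ht0 : Fintype.card V ≤ t 0) (htk : t (k + 1) ≤ 1) {N : ℝ}
    (hN : ∀ i ≤ k, t i ^ 2 ≤ N * t (i + 1)) :
    ∃ (A : ℕ → Finset V) (E : Finset (Sym2 V)), A 0 = univ ∧ A (k + 1) = ∅ ∧
      #E ≤ (k + 1) * (N + Fintype.card V) ∧ ∀ i ≤ k, CoversLevel d (A i) (A (i + 1)) E := by
  obtain ⟨A, E, hA0, hAE⟩ := exists_coversLevel_seq d univ ht
  have hAt (i : ℕ) : #(A i) ≤ t i := by
    cases i with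
    | zero => simpa [hA0] using ht0
    | succ i => exact (hAE i).1.le
  have hAk : #(A (k + 1)) < 1 := by exact_mod_cast (hAE k).1.trans_le htk
  have hE {i : ℕ} (hi : i ≤ k) : (#(E i) : ℝ) ≤ N + Fintype.card V :=
    calc (#(E i) : ℝ) ≤ #(A i) ^ 2 / t (i + 1) + #(A i) := (hAE i).2.1
      _ ≤ t i ^ 2 / t (i + 1) + Fintype.card V := by
          gcongr
          exacts [(ht _).le, hAt i, card_le_univ _]
      _ ≤ N + Fintype.card V := by
          gcongr
          exact (div_le_iff₀ (ht _)).mpr (hN i hi)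
  refine ⟨A, (range (k + 1)).biUnion E, hA0, card_eq_zero.mp (Nat.lt_one_iff.mp hAk), ?_,
    fun i hi => (hAE i).2.2.mono (subset_biUnion_of_mem E (mem_range_succ_iff.mpr hi))⟩
  calc (#((range (k + 1)).biUnion E) : ℝ) ≤ ∑ i ∈ range (k + 1), (#(E i) : ℝ) := by
        exact_mod_cast card_biUnion_le
    _ ≤ ∑ _ ∈ range (k + 1), (N + Fintype.card V) :=
        sum_le_sum fun i hi => hE (mem_range_succ_iff.mp hi)
    _ = (k + 1) * (N + Fintype.card V) := by
        rw [sum_const, card_range, nsmul_eq_mul, Nat.cast_succ]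

end Sampling

section ShortcutWeight

variable {V : Type*} {w : V → V → ℝ≥0∞} {E : Finset (Sym2 V)}

/-- The weighted edge set on the non-loop pairs of `E`, each weighted by the distance in `w`. -/
noncomputable def shortcutWeight (w : V → V → ℝ≥0∞) (E : Finset (Sym2 V)) (u v : V) : ℝ≥0∞ :=
  if u ≠ v ∧ s(u, v) ∈ E then gDist w u v else ⊤

theorem shortcutWeight_comm (hw : ∀ u v, w u v = w v u) (E : Finset (Sym2 V)) (u v : V) :
    shortcutWeight w E u v = shortcutWeight w E v u := by
  simp only [shortcutWeight, ne_comm (a := u), Sym2.eq_swap (a := u), gDist_comm hw u]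

theorem gDist_le_shortcutWeight (w : V → V → ℝ≥0∞) (E : Finset (Sym2 V)) (u v : V) :
    gDist w u v ≤ shortcutWeight w E u v := by
  rw [shortcutWeight]
  split_ifs
  exacts [le_rfl, le_top]

theorem shortcutWeight_pos [Finite V] (hw : ∀ u v, 0 < w u v) (E : Finset (Sym2 V)) (u v : V) :
    0 < shortcutWeight w E u v := by
  rw [shortcutWeight]
  split_ifs with h
  exacts [gDist_pos hw h.1, ENNReal.zero_lt_top]

theorem edgeCount_shortcutWeight_le (w : V → V → ℝ≥0∞) (E : Finset (Sym2 V)) :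
    edgeCount (shortcutWeight w E) ≤ #E := by
  rw [edgeCount, ← Set.ncard_coe_finset E]
  refine Set.ncard_le_ncard ?_ E.finite_toSet
  rintro _ ⟨u, v, rfl, -, hne_top⟩
  by_contra hE
  exact hne_top (if_neg fun h => hE h.2)

theorem isAugmentation_unionW_shortcutWeight (hw : ∀ u v, w u v = w v u) (E : Finset (Sym2 V)) :
    IsAugmentation w (unionW w (shortcutWeight w E)) where
  symm u v := by simp only [unionW, hw u v, shortcutWeight_comm hw E u v]
  le _ _ := min_le_left _ _
  gDist_le u v := le_min (gDist_le_weight w u v) (gDist_le_shortcutWeight w E u v)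

theorem hopDist_one_unionW_shortcutWeight_le {u v : V} (huv : s(u, v) ∈ E) :
    hopDist (unionW w (shortcutWeight w E)) 1 u v ≤ gDist w u v := by
  rcases eq_or_ne u v with rfl | hne
  · simp [hopDist_self]
  · exact (hopDist_one_le _ u v).trans ((min_le_right _ _).trans_eq (if_pos ⟨hne, huv⟩))

theorem CoversLevel.isShortcutLevel {A S : Finset V} (hE : CoversLevel (gDist w) A S E) :
    IsShortcutLevel w (unionW w (shortcutWeight w E)) A S := by
  intro u hu v hv
  refine (hE u hu v hv).imp hopDist_one_unionW_shortcutWeight_le ?_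
  rintro ⟨z, hz, huz, hle⟩
  exact ⟨z, hz, (hopDist_one_unionW_shortcutWeight_le huz).trans hle⟩

theorem isHopset_shortcutWeight [Fintype V] (hw : ∀ u v, w u v = w v u) {A : ℕ → Finset V}
    (hA0 : A 0 = univ) {k : ℕ} (hAk : A (k + 1) = ∅)
    (hE : ∀ i ≤ k, CoversLevel (gDist w) (A i) (A (i + 1)) E) {K : ℕ} (hK0 : K ≠ 0)
    (hK : 9 * k ≤ K) {β : ℕ} (hβ : (4 * K + 5) ^ k ≤ β) {ε : ℝ} (hε : 9 * k / K ≤ ε) :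
    IsHopset w (shortcutWeight w E) β ε := by
  have haug := isAugmentation_unionW_shortcutWeight hw E
  have hratio : 1 + 9 * (k : ℝ≥0∞) / K ≤ ENNReal.ofReal (1 + ε) :=
    calc 1 + 9 * (k : ℝ≥0∞) / K = ENNReal.ofReal (1 + 9 * k / K) := by
          rw [ENNReal.ofReal_add zero_le_one (by positivity), ENNReal.ofReal_one,
            ENNReal.ofReal_div_of_pos (by positivity), ENNReal.ofReal_mul (by positivity),
            ENNReal.ofReal_natCast, ENNReal.ofReal_natCast, ENNReal.ofReal_ofNat]
      _ ≤ ENNReal.ofReal (1 + ε) := by gcongr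
  refine fun u v => ⟨gDist_le_hopDist_of_gDist_le haug.gDist_le β u v, ?_⟩
  calc hopDist (unionW w (shortcutWeight w E)) β u v
      ≤ hopDist (unionW w (shortcutWeight w E)) ((4 * K + 5) ^ k) u v := hopDist_antitone _ u v hβ
    _ ≤ (1 + 9 * k / K) * gDist w u v :=
        hopDist_le_of_hierarchy hw haug hA0 (fun i hi => (hE i hi).isShortcutLevel) hAk hK0 hK u v
    _ ≤ ENNReal.ofReal (1 + ε) * gDist w u v := by gcongr

end ShortcutWeight

section Parameters

theorem exists_thresholds {n : ℝ} (hn : 1 ≤ n) {κ : ℕ} (hκ : κ ≠ 0) :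
    ∃ t : ℕ → ℝ, (∀ i, 0 < t i) ∧ t 0 = n ∧ t (Nat.log 2 κ + 1) ≤ 1 ∧
      ∀ i, t i ^ 2 = n ^ (1 + 1 / κ : ℝ) * t (i + 1) := by
  have hn0 : 0 < n := one_pos.trans_le hn
  obtain ⟨x, hx, hxκ, hnx⟩ : ∃ x : ℝ, 1 ≤ x ∧ x ^ κ = n ∧ n ^ (1 + 1 / κ : ℝ) = n * x := by
    refine ⟨n ^ (1 / κ : ℝ), Real.one_le_rpow hn (by positivity), ?_, ?_⟩
    · rw [one_div, Real.rpow_inv_natCast_pow hn0.le hκ]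
    · rw [Real.rpow_add hn0, Real.rpow_one]
  have hx0 : 0 < x := one_pos.trans_le hx
  refine ⟨fun i => n * x / x ^ 2 ^ i, fun i => by positivity, ?_, ?_, fun i => ?_⟩
  · simp [hx0.ne']
  · rw [div_le_one (by positivity), ← hxκ, ← pow_succ]
    exact pow_le_pow_right₀ hx (Nat.lt_pow_succ_log_self one_lt_two κ)
  · simp only [hnx, pow_succ 2 i, pow_mul]
    ring

theorem four_mul_natCeil_add_five_pow_le {k : ℕ} {L ε : ℝ} (hk : k ≤ L) (hL : 1 ≤ L) (hε : 0 < ε)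
    (hε1 : ε ≤ 1) : ((4 * ⌈9 * L / ε⌉₊ + 5) ^ k : ℝ) ≤ (45 * L / ε) ^ L := by
  have hone : 1 ≤ L / ε := (one_le_div hε).mpr (hε1.trans hL)
  have hceil : (⌈9 * L / ε⌉₊ : ℝ) < 9 * L / ε + 1 := Nat.ceil_lt_add_one (by positivity)
  have hbase : (4 * ⌈9 * L / ε⌉₊ + 5 : ℝ) ≤ 45 * L / ε := by
    simp only [mul_div_assoc] at hceil ⊢
    linarith only [hone, hceil]
  calc ((4 * ⌈9 * L / ε⌉₊ + 5) ^ k : ℝ) ≤ (45 * L / ε) ^ k := by gcongr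
    _ = (45 * L / ε) ^ (k : ℝ) := (Real.rpow_natCast _ k).symm
    _ ≤ (45 * L / ε) ^ L := Real.rpow_le_rpow_of_exponent_le (by linarith) hk

theorem rpow_one_add_one_div_min_le {n : ℕ} (hn : n ≠ 0) {κ : ℕ} :
    (n : ℝ) ^ (1 + 1 / (min κ n : ℕ) : ℝ) ≤ 2 * n ^ (1 + 1 / κ : ℝ) := by
  have hn1 : (1 : ℝ) ≤ n := by exact_mod_cast Nat.one_le_iff_ne_zero.mpr hn
  rcases le_total κ n with hκn | hnκ
  · rw [min_eq_left hκn]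
    exact le_mul_of_one_le_left (by positivity) one_le_two
  · rw [min_eq_right hnκ]
    have hroot : (n : ℝ) ^ (1 / n : ℝ) ≤ 2 :=
      calc (n : ℝ) ^ (1 / n : ℝ) ≤ ((2 : ℝ) ^ n) ^ (1 / n : ℝ) := by
            gcongr
            exact_mod_cast Nat.lt_two_pow_self.le
        _ = 2 := by rw [one_div, Real.pow_rpow_inv_natCast zero_le_two hn]
    calc (n : ℝ) ^ (1 + 1 / n : ℝ) = n ^ (1 / n : ℝ) * n := by
          rw [add_comm, Real.rpow_add_one (by positivity)]
      _ ≤ 2 * n ^ (1 + 1 / κ : ℝ) := by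
          gcongr
          exact Real.self_le_rpow_of_one_le hn1 (le_add_of_nonneg_right (by positivity))

theorem one_le_logb_two {n : ℕ} (hn : 2 ≤ n) : 1 ≤ Real.logb 2 n := by
  rw [Real.le_logb_iff_rpow_le one_lt_two (by positivity), Real.rpow_one]
  exact_mod_cast hn

theorem log_min_succ_mul_le {n : ℕ} (hn : 2 ≤ n) (κ : ℕ) :
    (Nat.log 2 (min κ n) + 1 : ℝ) * (n ^ (1 + 1 / (min κ n : ℕ) : ℝ) + n) ≤
      6 * n ^ (1 + 1 / κ : ℝ) * Real.logb 2 n := by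
  have hn1 : (1 : ℝ) ≤ n := by exact_mod_cast one_le_two.trans hn
  have hlog_one : 1 ≤ Real.logb 2 n := one_le_logb_two hn
  have hlog : (Nat.log 2 (min κ n) : ℝ) ≤ Real.logb 2 n :=
    (Nat.cast_le.mpr (Nat.log_mono_right (min_le_right κ n))).trans (Real.natLog_le_logb n 2)
  have hself : (n : ℝ) ≤ n ^ (1 + 1 / κ : ℝ) :=
    Real.self_le_rpow_of_one_le hn1 (le_add_of_nonneg_right (by positivity))
  calc (Nat.log 2 (min κ n) + 1 : ℝ) * (n ^ (1 + 1 / (min κ n : ℕ) : ℝ) + n)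
      ≤ (Real.logb 2 n + Real.logb 2 n) * (2 * n ^ (1 + 1 / κ : ℝ) + n ^ (1 + 1 / κ : ℝ)) := by
        gcongr
        exact rpow_one_add_one_div_min_le (by omega)
    _ = 6 * n ^ (1 + 1 / κ : ℝ) * Real.logb 2 n := by ring

end Parameters

theorem exists_isHopset {V : Type*} [Fintype V] [Nonempty V] {w : V → V → ℝ≥0∞}
    (hw : ∀ u v, w u v = w v u) (hpos : ∀ u v, 0 < w u v) {κ : ℕ} (hκ : κ ≠ 0) {K : ℕ}
    (hK0 : K ≠ 0) (hK : 9 * Nat.log 2 κ ≤ K) {β : ℕ} (hβ : (4 * K + 5) ^ Nat.log 2 κ ≤ β) {ε : ℝ}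
    (hε : 9 * Nat.log 2 κ / K ≤ ε) :
    ∃ wH : V → V → ℝ≥0∞, (∀ u v, wH u v = wH v u) ∧ (∀ u v, 0 < wH u v) ∧
      edgeCount wH ≤ (Nat.log 2 κ + 1) *
        ((Fintype.card V : ℝ) ^ (1 + 1 / κ : ℝ) + Fintype.card V) ∧ IsHopset w wH β ε := by
  obtain ⟨t, ht, ht0, htk, hN⟩ :=
    exists_thresholds (Nat.one_le_cast.mpr (Fintype.card_pos (α := V))) hκ
  obtain ⟨A, E, hA0, hAk, hEcard, hE⟩ :=
    exists_hierarchy (gDist w) ht ht0.ge htk fun i _ => (hN i).le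
  exact ⟨shortcutWeight w E, shortcutWeight_comm hw E, shortcutWeight_pos hpos E,
    (Nat.cast_le.mpr (edgeCount_shortcutWeight_le w E)).trans hEcard,
    isHopset_shortcutWeight hw hA0 hAk hE hK0 hK hβ hε⟩

theorem hopset_with_constant_hopbound_general :
    ∃ C : ℝ, 0 < C ∧
      ∀ (V : Type*) [Fintype V] (wG : V → V → ℝ≥0∞) (n κ : ℕ) (L ε : ℝ),
        Fintype.card V = n → 2 ≤ n →
        (∀ u v, wG u v = wG v u) →
        (∀ u v, 0 < wG u v) →
        2 ≤ κ → Real.logb 2 κ ≤ L →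
        0 < ε → ε ≤ 1 →
        ∃ wH : V → V → ℝ≥0∞,
          (∀ u v, wH u v = wH v u) ∧
          (∀ u v, 0 < wH u v) ∧
          (edgeCount wH : ℝ) ≤ C * (n : ℝ) ^ (1 + 1 / (κ : ℝ)) * Real.logb 2 n ∧
          IsHopset wG wH ⌈(C * L / ε) ^ L⌉₊ ε := by
  refine ⟨45, by norm_num, ?_⟩
  rintro V _ w _ κ L ε rfl hn hw hpos hκ hκL hε hε1
  set n := Fintype.card V
  -- Capping `κ` at `n` leaves at most `log₂ n + 1` levels and costs only a factor `n^(1/n) ≤ 2`.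
  have hV : Nonempty V := Fintype.card_pos_iff.mp (by omega)
  have hL : 1 ≤ L := (one_le_logb_two hκ).trans hκL
  have hkL : Nat.log 2 (min κ n) ≤ L :=
    (Nat.cast_le.mpr (Nat.log_mono_right (min_le_left κ n))).trans
      ((Real.natLog_le_logb κ 2).trans hκL)
  set K := ⌈9 * L / ε⌉₊
  have hK0 : 0 < K := Nat.ceil_pos.mpr (by positivity)
  have hK : 9 * (Nat.log 2 (min κ n) : ℝ) ≤ ε * K :=
    (mul_le_mul_of_nonneg_left hkL (by norm_num)).trans ((div_le_iff₀' hε).mp (Nat.le_ceil _))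
  obtain ⟨wH, hsymm, hpos', hcard, hhopset⟩ :=
    exists_isHopset hw hpos (κ := min κ n) (by omega) (K := K) hK0.ne'
      (by exact_mod_cast hK.trans (mul_le_of_le_one_left (Nat.cast_nonneg K) hε1))
      (by exact_mod_cast (four_mul_natCeil_add_five_pow_le hkL hL hε hε1).trans (Nat.le_ceil _))
      ((div_le_iff₀ (Nat.cast_pos.mpr hK0)).mpr hK)
  refine ⟨wH, hsymm, hpos', (hcard.trans (log_min_succ_mul_le hn κ)).trans ?_, hhopset⟩
  have hlog : 0 ≤ Real.logb 2 n := zero_le_one.trans (one_le_logb_two hn)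
  gcongr
  norm_num

theorem hopset_with_constant_hopbound :
    ∃ C : ℝ, 0 < C ∧
      ∀ (V : Type) [Fintype V] (wG : V → V → ℝ≥0∞) (n κ : ℕ) (ρ ε : ℝ),
        Fintype.card V = n → 2 ≤ n →
        (∀ u v, wG u v = wG v u) →
        (∀ u v, 0 < wG u v) →
        2 ≤ κ → (κ : ℝ) ≤ Real.logb 2 n / 4 →
        1 / (κ : ℝ) ≤ ρ → ρ < 1 / 2 →
        0 < ε → ε ≤ 1 →
        ∃ wH : V → V → ℝ≥0∞,
          (∀ u v, wH u v = wH v u) ∧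
          (∀ u v, 0 < wH u v) ∧
          (edgeCount wH : ℝ) ≤ C * (n : ℝ) ^ (1 + 1 / (κ : ℝ)) * Real.logb 2 n ∧
          IsHopset wG wH
            ⌈(C * (Real.logb 2 κ + 1 / ρ) / ε) ^ (Real.logb 2 κ + 1 / ρ)⌉₊ ε := by
  obtain ⟨C, hC, hhopset⟩ := hopset_with_constant_hopbound_general
  refine ⟨C, hC, fun V _ w n κ ρ ε hcard hn hw hpos hκ _ hρ _ => ?_⟩
  have hρ_pos : 0 ≤ 1 / ρ := one_div_nonneg.mpr (le_trans (by positivity) hρ)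
  exact hhopset V w n κ _ ε hcard hn hw hpos hκ (le_add_of_nonneg_right hρ_pos)
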